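/- Let d ≥ 2 and 1 ≤ n < d. Let σ be a positive semidefinite matrix on ℂ^d ⊗ ℂ^d with Tr σ = 1 and let t ≥ 0. If P_+ + t·σ has Schmidt number at most n, then t ≥ (d−n)/n. -/

import Mathlib

open Matrix BigOperators Kronecker ComplexOrder

/-- The d×d matrix `M_v` associated with a vector `v` on ℂ^d ⊗ ℂ^d, `(M_v)_{ij} = v (i,j)`. -/
def toMat (d : ℕ) (v : Fin d × Fin d → ℂ) : Matrix (Fin d) (Fin d) ℂ :=
  Matrix.of fun i j => v (i, j)

/-- `ρ` has Schmidt number at most `n`: it is a finite sum of `w wᴴ` with each `w` of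
Schmidt rank (i.e. rank of the associated d×d matrix) at most `n`. -/
def SchmidtNumberLE (d : ℕ) (ρ : Matrix (Fin d × Fin d) (Fin d × Fin d) ℂ) (n : ℕ) : Prop :=
  ∃ (k : ℕ) (w : Fin k → (Fin d × Fin d → ℂ)),
    (∀ i, (toMat d (w i)).rank ≤ n) ∧
    ρ = ∑ i, Matrix.vecMulVec (w i) (star (w i))

/-- The maximally entangled unit vector `ψ₊ = (1/√d) Σ_i |ii⟩`. -/
noncomputable def psiPlus (d : ℕ) : Fin d × Fin d → ℂ :=
  fun p => if p.1 = p.2 then (((Real.sqrt d)⁻¹ : ℝ) : ℂ) else 0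

/-- `P₊ = ψ₊ ψ₊ᴴ`. -/
noncomputable def Pplus (d : ℕ) : Matrix (Fin d × Fin d) (Fin d × Fin d) ℂ :=
  Matrix.vecMulVec (psiPlus d) (star (psiPlus d))

/-!
Compare `ρ = P₊ + t σ` through its overlap with `ψ₊`. If `P` is the orthogonal projection onto the
range of `M`, then `tr M = ⟨P, M⟩` and `⟨P, P⟩ = rank M` in the Hilbert–Schmidt inner product, so
Cauchy–Schwarz gives `|tr M|² ≤ rank M · tr (Mᴴ M)`. Since `⟨ψ₊, w⟩ = tr M_w / √d`, every `ρ` of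
Schmidt number at most `n` satisfies `d ⟨ψ₊, ρ ψ₊⟩ ≤ n tr ρ`. For `ρ = P₊ + t σ` the left side is
at least `d` by positivity of `σ`, while the right side is `n (1 + t)`.
-/

section Matrices

variable {𝕜 ι : Type*} [RCLike 𝕜] [Fintype ι]

lemma norm_star_dotProduct_sq_le (v w : ι → 𝕜) :
    ‖star v ⬝ᵥ w‖ ^ 2 ≤ RCLike.re (star v ⬝ᵥ v) * RCLike.re (star w ⬝ᵥ w) := by
  have cauchySchwarz := inner_mul_inner_self_le (𝕜 := 𝕜) (WithLp.toLp 2 v) (WithLp.toLp 2 w)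
  rw [norm_inner_symm (WithLp.toLp 2 w), ← sq] at cauchySchwarz
  simpa only [EuclideanSpace.inner_toLp_toLp, dotProduct_comm _ (star _)] using cauchySchwarz

lemma norm_trace_conjTranspose_mul_sq_le {κ : Type*} [Fintype κ] (A B : Matrix ι κ 𝕜) :
    ‖(Aᴴ * B).trace‖ ^ 2 ≤ RCLike.re (Aᴴ * A).trace * RCLike.re (Bᴴ * B).trace := by
  simpa only [star_vec_dotProduct_vec] using norm_star_dotProduct_sq_le A.vec B.vec

lemma star_dotProduct_vecMulVec_star_mulVec (v w : ι → 𝕜) :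
    star v ⬝ᵥ (vecMulVec w (star w) *ᵥ v) = ((‖star v ⬝ᵥ w‖ ^ 2 : ℝ) : 𝕜) := by
  rw [vecMulVec_mulVec, dotProduct_smul, star_dotProduct, op_smul_eq_mul, RCLike.star_def,
    RCLike.mul_conj, RCLike.ofReal_pow]

lemma trace_starProjection_eq_finrank {E : Type*} [NormedAddCommGroup E] [InnerProductSpace 𝕜 E]
    [FiniteDimensional 𝕜 E] (K : Submodule 𝕜 E) :
    LinearMap.trace 𝕜 E K.starProjection = Module.finrank 𝕜 K :=
  LinearMap.IsProj.trace
    ⟨K.starProjection_apply_mem, fun _ ↦ Submodule.starProjection_eq_self_iff.mpr⟩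

lemma exists_isStarProjection_mul_eq_self_trace_eq_rank (M : Matrix ι ι 𝕜) :
    ∃ P : Matrix ι ι 𝕜, IsStarProjection P ∧ P * M = M ∧ P.trace = M.rank := by
  classical
  let b := EuclideanSpace.basisFun ι 𝕜
  let Φ := LinearMap.toMatrixOrthonormal b
  let T := toLin b.toBasis b.toBasis M
  let Q := T.range.starProjection.toLinearMap
  have Φ_T : Φ T = M := LinearMap.toMatrix_toLin _ _ _
  have isStarProjection_Q : IsStarProjection Q :=
    LinearMap.isStarProjection_iff_isSymmetricProjection.mpr
      T.range.isSymmetricProjection_starProjection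
  have Q_mul_T : Q * T = T :=
    LinearMap.ext fun x ↦ Submodule.starProjection_eq_self_iff.mpr ⟨x, rfl⟩
  have trace_Φ_Q : (Φ Q).trace = LinearMap.trace 𝕜 _ Q :=
    (LinearMap.trace_eq_matrix_trace 𝕜 b.toBasis Q).symm
  refine ⟨Φ Q, isStarProjection_Q.map Φ, ?_, ?_⟩
  · simpa only [map_mul, Φ_T] using congrArg Φ Q_mul_T
  · rw [trace_Φ_Q, trace_starProjection_eq_finrank,
      rank_eq_finrank_range_toLin M b.toBasis b.toBasis]

theorem norm_trace_sq_le_rank_mul_trace_conjTranspose_mul_self (M : Matrix ι ι 𝕜) :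
    ‖M.trace‖ ^ 2 ≤ M.rank * RCLike.re (Mᴴ * M).trace := by
  obtain ⟨P, hP, hPM, hPtrace⟩ := exists_isStarProjection_mul_eq_self_trace_eq_rank M
  have conjTranspose_P : Pᴴ = P := hP.isSelfAdjoint
  have cauchySchwarz := norm_trace_conjTranspose_mul_sq_le P M
  rwa [conjTranspose_P, hPM, hP.isIdempotentElem.eq, hPtrace, RCLike.natCast_re] at cauchySchwarz

end Matrices

lemma trace_conjTranspose_toMat_mul_toMat {d : ℕ} (v w : Fin d × Fin d → ℂ) :
    ((toMat d v)ᴴ * toMat d w).trace = star v ⬝ᵥ w := by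
  simp only [trace, diag_apply, mul_apply, conjTranspose_apply, toMat, of_apply, dotProduct,
    Pi.star_apply, Fintype.sum_prod_type_right]

lemma toMat_psiPlus (d : ℕ) : toMat d (psiPlus d) = ((√d)⁻¹ : ℝ) • 1 := by
  ext i j
  simp [toMat, psiPlus, one_apply]

lemma star_psiPlus_dotProduct {d : ℕ} (w : Fin d × Fin d → ℂ) :
    star (psiPlus d) ⬝ᵥ w = ((√d)⁻¹ : ℝ) • (toMat d w).trace := by
  rw [← trace_conjTranspose_toMat_mul_toMat, toMat_psiPlus, conjTranspose_smul,
    conjTranspose_one, smul_mul, one_mul, trace_smul, star_trivial]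

lemma star_psiPlus_dotProduct_psiPlus (d : ℕ) [NeZero d] :
    star (psiPlus d) ⬝ᵥ psiPlus d = 1 := by
  have d_ne_zero : (d : ℝ) ≠ 0 := NeZero.ne _
  rw [star_psiPlus_dotProduct, toMat_psiPlus, trace_smul, trace_one, Fintype.card_fin, smul_smul,
    ← mul_inv, Real.mul_self_sqrt d.cast_nonneg, Complex.real_smul, ← Complex.ofReal_natCast,
    ← Complex.ofReal_mul, inv_mul_cancel₀ d_ne_zero, Complex.ofReal_one]

lemma trace_Pplus (d : ℕ) [NeZero d] : (Pplus d).trace = 1 := by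
  rw [Pplus, trace_vecMulVec, dotProduct_comm, star_psiPlus_dotProduct_psiPlus]

lemma star_psiPlus_dotProduct_Pplus_mulVec_psiPlus (d : ℕ) [NeZero d] :
    star (psiPlus d) ⬝ᵥ (Pplus d *ᵥ psiPlus d) = 1 := by
  simp [Pplus, star_dotProduct_vecMulVec_star_mulVec, star_psiPlus_dotProduct_psiPlus]

lemma natCast_mul_norm_star_psiPlus_dotProduct_sq {d : ℕ} (w : Fin d × Fin d → ℂ) :
    d * ‖star (psiPlus d) ⬝ᵥ w‖ ^ 2 = ‖(toMat d w).trace‖ ^ 2 := by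
  rcases eq_or_ne d 0 with rfl | d_ne_zero
  · simp [trace]
  · rw [star_psiPlus_dotProduct, norm_smul, mul_pow, Real.norm_eq_abs, sq_abs, inv_pow,
      Real.sq_sqrt d.cast_nonneg, mul_inv_cancel_left₀ (Nat.cast_ne_zero.mpr d_ne_zero)]

lemma natCast_mul_norm_star_psiPlus_dotProduct_sq_le {d n : ℕ} {w : Fin d × Fin d → ℂ}
    (hw : (toMat d w).rank ≤ n) :
    d * ‖star (psiPlus d) ⬝ᵥ w‖ ^ 2 ≤ n * (star w ⬝ᵥ w).re := by
  have star_w_dotProduct_w_nonneg : 0 ≤ (star w ⬝ᵥ w).re :=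
    (Complex.nonneg_iff.mp (dotProduct_star_self_nonneg w)).1
  calc
    d * ‖star (psiPlus d) ⬝ᵥ w‖ ^ 2 = ‖(toMat d w).trace‖ ^ 2 :=
      natCast_mul_norm_star_psiPlus_dotProduct_sq w
    _ ≤ (toMat d w).rank * (star w ⬝ᵥ w).re := by
      rw [← trace_conjTranspose_toMat_mul_toMat]
      exact norm_trace_sq_le_rank_mul_trace_conjTranspose_mul_self _
    _ ≤ n * (star w ⬝ᵥ w).re := by gcongr

theorem SchmidtNumberLE.natCast_mul_re_psiPlus_expectation_le {d n : ℕ}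
    {ρ : Matrix (Fin d × Fin d) (Fin d × Fin d) ℂ} (h : SchmidtNumberLE d ρ n) :
    d * (star (psiPlus d) ⬝ᵥ (ρ *ᵥ psiPlus d)).re ≤ n * ρ.trace.re := by
  obtain ⟨k, w, hw, rfl⟩ := h
  simp only [sum_mulVec, dotProduct_sum, trace_sum, star_dotProduct_vecMulVec_star_mulVec,
    trace_vecMulVec, Complex.re_sum, Finset.mul_sum, dotProduct_comm (w _) (star _)]
  exact Finset.sum_le_sum fun i _ ↦ natCast_mul_norm_star_psiPlus_dotProduct_sq_le (hw i)

theorem lower_bound_gsr_mes_general {d n : ℕ} [NeZero d] (hn : 1 ≤ n)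
    {τ : Matrix (Fin d × Fin d) (Fin d × Fin d) ℂ}
    (hτ : 0 ≤ (star (psiPlus d) ⬝ᵥ (τ *ᵥ psiPlus d)).re)
    (h : SchmidtNumberLE d (Pplus d + τ) n) :
    ((d : ℝ) - n) / n ≤ τ.trace.re := by
  have fidelity_le : d * (1 + (star (psiPlus d) ⬝ᵥ (τ *ᵥ psiPlus d)).re) ≤
      n * (1 + τ.trace.re) := by
    simpa only [add_mulVec, dotProduct_add, trace_add, trace_Pplus, Complex.add_re, Complex.one_re,
      star_psiPlus_dotProduct_Pplus_mulVec_psiPlus] using h.natCast_mul_re_psiPlus_expectation_le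
  rw [div_le_iff₀ (Nat.cast_pos.mpr hn)]
  linarith [mul_nonneg (d.cast_nonneg (α := ℝ)) hτ]

/-- Lower bound: if `P₊ + t σ` has Schmidt number at most `n` then `t ≥ (d-n)/n`. -/
theorem lower_bound_gsr_mes (d n : ℕ) (hd : 2 ≤ d) (hn : 1 ≤ n) (hnd : n < d)
    (σ : Matrix (Fin d × Fin d) (Fin d × Fin d) ℂ) (hσ : σ.PosSemidef)
    (htr : σ.trace = 1) (t : ℝ) (ht : 0 ≤ t)
    (h : SchmidtNumberLE d (Pplus d + t • σ) n) :
    ((d : ℝ) - n) / n ≤ t := by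
  have : NeZero d := ⟨by lia⟩
  have hτ := (hσ.smul ht).re_dotProduct_nonneg (psiPlus d)
  simpa [htr] using lower_bound_gsr_mes_general hn hτ h
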